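/- Let θ ∈ (0, π) with cos θ ∈ ℚ, and write cos θ = s/r with r, s coprime integers and r > 0. Let n be a positive squarefree integer with n ∉ {1, 2, 3, 6}. Then n is θ-congruent if and only if the curve E_{n,θ} : n·y² = (1/r)·x·(x + s/r − 1)·(x + s/r + 1) has infinitely many rational points; that is, if and only if the set {(x, y) ∈ ℚ × ℚ : n·y² = x·(x + s/r − 1)·(x + s/r + 1)/r} is infinite (equivalently, E_{n,θ}(ℚ) has positive rank). -/

import Mathlib

/-!
Multiplying the equation of `E_{n,θ}` by `n³ r³` gives the cubic
`Y² = X (X + n (s + r)) (X + n (s - r))`. A triangle with sides `a, b, c` yields the rational point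
with abscissa `X = x²`, `x = c / 2`, because `x² + n (s ± r) = ((a ± b) / 2)²`; conversely, all but
finitely many points of `E_{n,θ}` yield a triangle.

It remains to see that the point coming from a triangle has infinite order. Let `p > 3` be a prime
dividing `n` exactly once. A parity argument shows that `x` has nonpositive `p`-adic order, so the
point is `p`-integral in the coordinates `z = X / Y`, `w = 1 / Y` around the point at infinity. In
this chart the cubic has coefficients divisible by `p`, chords and tangents never leave the chart,
and the `k`-th multiple of a point has first coordinate
`z (k - 2 a C(k + 1, 3) z² + O(p²))`, where `p ∣ a`. For `k = p > 3` this is `p z` times a unit,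
so iterating produces infinitely many points.
-/

/-- A positive squarefree integer `n` is `θ`-congruent (where `cos θ = s / r` with
`r > 0` and `gcd(s, r) = 1`) if `n * r * sin θ` is the area of a triangle with rational
sides and an angle `θ`; equivalently, there are positive rationals `a, b, c` with
`a * b = 2 * n * r` and `c ^ 2 = a ^ 2 + b ^ 2 - 2 * a * b * (s / r)`. -/
def IsThetaCongruent (r s : ℤ) (n : ℕ) : Prop :=
  ∃ a b c : ℚ, 0 < a ∧ 0 < b ∧ 0 < c ∧
    a * b = 2 * (n : ℚ) * (r : ℚ) ∧
    c ^ 2 = a ^ 2 + b ^ 2 - 2 * a * b * ((s : ℚ) / (r : ℚ))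

/-- The curve `w = z³ + a z² w + b z w²`, which is `Y² = X³ + a X² + b X` in the coordinates
`z = X / Y`, `w = 1 / Y` around its point at infinity. The group law with origin
`(z, w) = (0, 0)` is used through the existence of sums, so that it makes sense over a ring. -/
def OnChart {R : Type*} [CommRing R] (a b z w : R) : Prop :=
  w = z ^ 3 + a * z ^ 2 * w + b * z * w ^ 2

namespace OnChart

section CommRing

variable {R S : Type*} [CommRing R] [CommRing S] {a b z w z₁ w₁ z₂ w₂ : R}

lemma map (f : R →+* S) (h : OnChart a b z w) : OnChart (f a) (f b) (f z) (f w) := by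
  simpa [OnChart] using congrArg f h

lemma exists_slope (ha : a ∈ Ideal.jacobson (⊥ : Ideal R)) (hb : b ∈ Ideal.jacobson (⊥ : Ideal R))
    (h₁ : OnChart a b z₁ w₁) (h₂ : OnChart a b z₂ w₂) :
    ∃ l, w₁ - w₂ = l * (z₁ - z₂) ∧
      l = z₁ ^ 2 + z₁ * z₂ + z₂ ^ 2 + a * (z₁ ^ 2 * l + (z₁ + z₂) * w₂)
        + b * (z₁ * l * (w₁ + w₂) + w₂ ^ 2) := by
  have hD : IsUnit (1 - a * z₁ ^ 2 - b * z₁ * (w₁ + w₂)) := by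
    refine Ideal.isUnit_of_sub_one_mem_jacobson_bot _ ?_
    convert neg_mem (add_mem (Ideal.mul_mem_right (z₁ ^ 2) _ ha)
      (Ideal.mul_mem_right (z₁ * (w₁ + w₂)) _ hb)) using 1
    ring
  obtain ⟨D', hD'⟩ := hD.exists_right_inv
  unfold OnChart at h₁ h₂
  set N := z₁ ^ 2 + z₁ * z₂ + z₂ ^ 2 + a * (z₁ + z₂) * w₂ + b * w₂ ^ 2 with hN
  refine ⟨N * D', hD.mul_left_cancel ?_, ?_⟩
  · linear_combination h₁ - h₂ + (z₁ - z₂) * hN - (z₁ - z₂) * N * hD'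
  · linear_combination N * hD' + hN

lemma exists_add (ha : a ∈ Ideal.jacobson (⊥ : Ideal R)) (hb : b ∈ Ideal.jacobson (⊥ : Ideal R))
    (h₁ : OnChart a b z₁ w₁) (h₂ : OnChart a b z₂ w₂) :
    ∃ z₃ w₃ l, OnChart a b z₃ w₃ ∧ z₃ = z₁ + z₂ - (a + 2 * b * l) * (z₁ * z₂ * z₃) := by
  obtain ⟨l, hl, hchord⟩ := exists_slope ha hb h₁ h₂
  obtain ⟨v, hv₁⟩ : ∃ v, w₁ = l * z₁ + v := ⟨w₁ - l * z₁, by ring⟩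
  have hv₂ : w₂ = l * z₂ + v := by linear_combination hv₁ - hl
  have hT : IsUnit (1 + a * l + b * l ^ 2) := by
    refine Ideal.isUnit_of_sub_one_mem_jacobson_bot _ ?_
    convert add_mem (Ideal.mul_mem_right l _ ha) (Ideal.mul_mem_right (l ^ 2) _ hb) using 1
    ring
  obtain ⟨T', hT'⟩ := hT.exists_right_inv
  obtain ⟨z₃, hz₃⟩ : ∃ z₃, (1 + a * l + b * l ^ 2) * (z₃ - z₁ - z₂) = (a + 2 * b * l) * v :=
    ⟨z₁ + z₂ + T' * ((a + 2 * b * l) * v), by linear_combination (a + 2 * b * l) * v * hT'⟩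
  unfold OnChart at h₁
  rw [hv₁] at h₁
  rw [hv₁, hv₂] at hchord
  -- Vieta: the line `w = l * z + v` meets the chart at `z₁`, `z₂` and `-z₃`.
  have hprod : v = -(1 + a * l + b * l ^ 2) * (z₁ * z₂ * z₃) := by
    linear_combination h₁ - z₁ * hchord + z₁ * z₂ * hz₃
  refine ⟨z₃, l * z₃ - v, l, ?_, hT.mul_left_cancel ?_⟩
  · unfold OnChart
    linear_combination -h₁ + (z₃ + z₁) * hchord - (z₃ + z₁) * (z₃ + z₂) * hz₃
  · linear_combination hz₃ + (a + 2 * b * l) * hprod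

variable {q α β : R}

lemma exists_add_second_order (hq : q ∈ Ideal.jacobson (⊥ : Ideal R))
    (h₁ : OnChart (q * α) (q ^ 2 * β) z₁ w₁) (h₂ : OnChart (q * α) (q ^ 2 * β) z₂ w₂) :
    ∃ z₃ w₃ e, OnChart (q * α) (q ^ 2 * β) z₃ w₃ ∧
      z₃ = z₁ + z₂ + z₁ * z₂ * (-(q * α * (z₁ + z₂)) + q ^ 2 * e) := by
  obtain ⟨z₃, w₃, l, h₃, hz₃⟩ := exists_add (Ideal.mul_mem_right _ _ hq)
    (Ideal.mul_mem_right _ _ (Ideal.pow_mem_of_mem _ hq 2 two_pos)) h₁ h₂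
  refine ⟨z₃, w₃, α * (α + 2 * q * β * l) * (z₁ * z₂ * z₃) - 2 * β * l * z₃, h₃, ?_⟩
  linear_combination (1 - q * α * z₁ * z₂) * hz₃

lemma exists_nsmul (hq : q ∈ Ideal.jacobson (⊥ : Ideal R))
    (h : OnChart (q * α) (q ^ 2 * β) z w) (k : ℕ) :
    ∃ z' w' e, OnChart (q * α) (q ^ 2 * β) z' w' ∧
      z' = z * (k - 2 * q * α * (k + 1).choose 3 * z ^ 2 + q ^ 2 * e) := by
  induction k with
  | zero => exact ⟨0, 0, 0, by simp [OnChart], by simp [Nat.choose_eq_zero_of_lt]⟩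
  | succ k ih =>
    obtain ⟨z₁, w₁, e, h₁, hz₁⟩ := ih
    obtain ⟨z₂, w₂, e', h₂, hz₂⟩ := exists_add_second_order hq h₁ h
    obtain ⟨y, hy⟩ : ∃ y, y = -(2 * α * (k + 1).choose 3 * z ^ 2) + q * e := ⟨_, rfl⟩
    have hz₁y : z₁ = z * (k + q * y) := by rw [hz₁, hy]; ring
    have hchoose : (2 * (k + 2).choose 3 : R) = 2 * (k + 1).choose 3 + k * (k + 1) := by
      have hnat : (k + 1) * k = (k + 1).choose 2 * 2 := by
        simpa using Nat.add_one_mul_choose_eq k 1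
      have hcast : ((k + 1) * k : R) = (k + 1).choose 2 * 2 := by
        exact_mod_cast congrArg (Nat.cast : ℕ → R) hnat
      rw [Nat.choose_succ_succ' (k + 1) 2]
      push_cast
      linear_combination -hcast
    refine ⟨z₂, w₂, e + z₁ * e' - α * z ^ 2 * y * (2 * k + 1 + q * y), h₂, ?_⟩
    rw [hz₂]
    push_cast
    rw [hz₁y]
    linear_combination q * z * hy + q * α * z ^ 3 * hchoose

lemma exists_prime_nsmul {p : ℕ} (hp : p.Prime) (hp3 : 3 < p)
    (hpR : (p : R) ∈ Ideal.jacobson (⊥ : Ideal R)) (h : OnChart (p * α) (p ^ 2 * β) z w) :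
    ∃ z' w' f, OnChart (p * α) (p ^ 2 * β) z' w' ∧ z' = z * p * (1 + p * f) := by
  obtain ⟨z', w', e, h', hz'⟩ := exists_nsmul hpR h p
  have hdvd : p ∣ (p + 1).choose 3 := by
    rw [Nat.choose_succ_succ']
    exact dvd_add (hp.dvd_choose_self two_ne_zero (by lia)) (hp.dvd_choose_self three_ne_zero hp3)
  obtain ⟨c, hc⟩ := hdvd
  refine ⟨z', w', e - 2 * α * c * z ^ 2, h', ?_⟩
  rw [hz', hc]
  push_cast
  ring

theorem infinite_of_mem_jacobson [IsDomain R] [CharZero R] {p : ℕ} (hp : p.Prime) (hp3 : 3 < p)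
    (hpR : (p : R) ∈ Ideal.jacobson (⊥ : Ideal R)) (h : OnChart (p * α) (p ^ 2 * β) z w)
    (hz : z ≠ 0) :
    {P : R × R | OnChart (p * α) (p ^ 2 * β) P.1 P.2 ∧ P.1 ≠ 0}.Infinite := by
  intro hfin
  -- In a finite set some first coordinate is maximal for divisibility; multiplication by `p`
  -- contradicts this.
  obtain ⟨⟨z₀, w₀⟩, ⟨h₀, hz₀⟩, hmin⟩ :=
    hfin.exists_minimalFor (fun P => Ideal.span {P.1}) _ ⟨(z, w), h, hz⟩
  obtain ⟨z₁, w₁, f, h₁, hz₁⟩ := exists_prime_nsmul hp hp3 hpR h₀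
  have hunit : IsUnit (1 + p * f) := by
    simpa [add_comm] using Ideal.mem_jacobson_bot.mp hpR f
  have hz₁0 : z₁ ≠ 0 := hz₁ ▸ mul_ne_zero (mul_ne_zero hz₀ (mod_cast hp.ne_zero)) hunit.ne_zero
  have hdvd : z₁ ∣ z₀ := Ideal.span_singleton_le_span_singleton.mp <|
    hmin (j := (z₁, w₁)) ⟨h₁, hz₁0⟩ <| Ideal.span_singleton_le_span_singleton.mpr
      ⟨p * (1 + p * f), by rw [hz₁]; ring⟩
  obtain ⟨g, hg⟩ := hdvd
  have hpunit : (p : R) * ((1 + p * f) * g) = 1 :=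
    mul_left_cancel₀ hz₀ (by linear_combination -hg - g * hz₁)
  refine not_isUnit_zero (M₀ := R) ?_
  simpa [hpunit] using Ideal.mem_jacobson_bot.mp hpR (-((1 + p * f) * g))

end CommRing

section Field

variable {K : Type*} [Field K] {a b : K}

lemma infinite_affine (h : {P : K × K | OnChart a b P.1 P.2 ∧ P.1 ≠ 0}.Infinite) :
    {P : K × K | P.2 ^ 2 = P.1 ^ 3 + a * P.1 ^ 2 + b * P.1}.Infinite := by
  have hw : ∀ P ∈ {P : K × K | OnChart a b P.1 P.2 ∧ P.1 ≠ 0}, P.2 ≠ 0 := by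
    rintro ⟨z, w⟩ ⟨hzw, hz⟩ rfl
    exact pow_ne_zero 3 hz (by simpa [OnChart] using hzw.symm)
  have hinj : Set.InjOn (fun P : K × K => (P.1 / P.2, 1 / P.2))
      {P : K × K | OnChart a b P.1 P.2 ∧ P.1 ≠ 0} := by
    rintro ⟨z, w⟩ hP ⟨z', w'⟩ hP' heq
    have hw₁ := hw _ hP
    simp only [Prod.mk.injEq, one_div, inv_inj] at heq hw₁ ⊢
    obtain ⟨hz, rfl⟩ := heq
    exact ⟨(div_left_inj' hw₁).mp hz, rfl⟩
  refine (h.image hinj).mono ?_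
  rintro _ ⟨⟨z, w⟩, hP, rfl⟩
  have hw₁ := hw _ hP
  have hzw := hP.1
  simp only [OnChart, Set.mem_ofPred_eq] at hzw hw₁ ⊢
  field_simp
  linear_combination hzw

end Field

end OnChart

section Valuation

variable {K Γ₀ : Type*} [Field K] [LinearOrderedCommGroupWithZero Γ₀] {v : Valuation K Γ₀}

lemma mem_jacobson_bot_integer {x : v.integer} (hx : v x < 1) :
    x ∈ Ideal.jacobson (⊥ : Ideal v.integer) := by
  refine Ideal.mem_jacobson_bot.mpr fun y =>
    (Valuation.integer.integers v).isUnit_iff_valuation_eq_one.mpr ?_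
  have hxy : v (x * y) < 1 := by
    rw [map_mul]
    exact mul_lt_one_of_lt_of_le hx y.2
  rw [add_comm]
  exact v.map_one_add_of_lt hxy

theorem OnChart.infinite_of_valuation_le_one [CharZero K] {p : ℕ} (hp : p.Prime) (hp3 : 3 < p)
    (hvp : v p < 1) {a b z w : K} (ha : v a ≤ v p) (hb : v b ≤ v p ^ 2) (hz1 : v z ≤ 1)
    (hw1 : v w ≤ 1) (h : OnChart a b z w) (hz : z ≠ 0) :
    {P : K × K | OnChart a b P.1 P.2 ∧ P.1 ≠ 0}.Infinite := by
  have hp0 : (p : K) ≠ 0 := mod_cast hp.ne_zero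
  have hvp0 : 0 < v p := v.pos_iff.mpr hp0
  obtain ⟨α, rfl⟩ : ∃ α : v.integer, a = p * α :=
    ⟨⟨a / p, by simpa [Valuation.mem_integer_iff, div_le_one₀ hvp0]⟩, by field_simp⟩
  obtain ⟨β, rfl⟩ : ∃ β : v.integer, b = p ^ 2 * β :=
    ⟨⟨b / p ^ 2, by simpa [Valuation.mem_integer_iff, div_le_one₀ (pow_pos hvp0 2)]⟩,
      by field_simp⟩
  obtain ⟨z, rfl⟩ : ∃ z' : v.integer, z' = z := ⟨⟨z, hz1⟩, rfl⟩
  obtain ⟨w, rfl⟩ : ∃ w' : v.integer, w' = w := ⟨⟨w, hw1⟩, rfl⟩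
  have hinf := infinite_of_mem_jacobson (z := z) (w := w) (α := α) (β := β) hp hp3
    (mem_jacobson_bot_integer hvp) (Subtype.ext h) fun h0 => hz (congrArg Subtype.val h0)
  refine (hinf.image (Subtype.val_injective.prodMap Subtype.val_injective).injOn).mono ?_
  rintro _ ⟨⟨z', w'⟩, ⟨h', hz'⟩, rfl⟩
  exact ⟨h'.map v.integer.subtype, fun h0 => hz' (Subtype.ext h0)⟩

lemma valuation_eq_of_sq_eq_sq_add {x y e : K} (h : y ^ 2 = x ^ 2 + e) (he : v e < 1)
    (hx : 1 ≤ v x) : v y = v x := by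
  have hlt : v e < v (x ^ 2) := he.trans_le (by rw [map_pow]; exact one_le_pow₀ hx)
  have hsq : v y ^ 2 = v x ^ 2 := by
    rw [← map_pow, h, v.map_add_eq_of_lt_left hlt, map_pow]
  exact (pow_left_inj₀ zero_le zero_le two_ne_zero).mp hsq

theorem infinite_cubic_of_sq_eq_sq_add [CharZero K] {p : ℕ} (hp : p.Prime) (hp3 : 3 < p)
    (hvp : v p < 1) {e f x y z : K} (he : v e ≤ v p) (hf : v f ≤ v p) (hx : 1 ≤ v x)
    (hy : y ^ 2 = x ^ 2 + e) (hz : z ^ 2 = x ^ 2 + f) :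
    {P : K × K | P.2 ^ 2 = P.1 * (P.1 + e) * (P.1 + f)}.Infinite := by
  have hvy : v y = v x := valuation_eq_of_sq_eq_sq_add hy (he.trans_lt hvp) hx
  have hvz : v z = v x := valuation_eq_of_sq_eq_sq_add hz (hf.trans_lt hvp) hx
  have hvx : 0 < v x := zero_lt_one.trans_le hx
  have hx0 : x ≠ 0 := v.pos_iff.mp hvx
  have hy0 : y ≠ 0 := v.pos_iff.mp (hvy ▸ hvx)
  have hz0 : z ≠ 0 := v.pos_iff.mp (hvz ▸ hvx)
  -- The point `(X, Y) = (x ^ 2, x * y * z)` of the cubic.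
  have hchart : OnChart (e + f) (e * f) (x / (y * z)) (1 / (x * y * z)) := by
    unfold OnChart
    field_simp
    linear_combination y ^ 2 * hz + (x ^ 2 + f) * hy
  have hinv : (v x)⁻¹ ≤ 1 := inv_le_one_of_one_le₀ hx
  have hinf := hchart.infinite_of_valuation_le_one hp hp3 hvp (v.map_add_le he hf)
    (by rw [map_mul, sq]; exact mul_le_mul' he hf)
    (by
      rw [map_div₀, map_mul, hvy, hvz, div_mul_cancel_left₀ hvx.ne']
      exact hinv)
    (by
      rw [map_div₀, map_mul, map_mul, hvy, hvz, map_one, one_div, mul_inv, mul_inv]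
      exact mul_le_one' (mul_le_one' hinv hinv) hinv)
    (div_ne_zero hx0 (mul_ne_zero hy0 hz0))
  convert OnChart.infinite_affine hinf using 5
  ring

end Valuation

open WithZero in
lemma one_le_valuation_of_sq_eq_sq_add {R : Type*} [Ring R] {v : Valuation R ℤᵐ⁰} {x y e : R}
    (he : v e = exp (-1)) (h : y ^ 2 = x ^ 2 + e) : 1 ≤ v x := by
  -- Otherwise `e` dominates `x ^ 2`, and `y ^ 2` would have odd valuation.
  by_contra! hx
  have hx' : v x ≤ exp (-1) := by
    rw [← lt_mul_exp_iff_le exp_ne_zero, ← exp_add]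
    simpa using hx
  have hlt : v (x ^ 2) < v e := by
    rw [he, map_pow, sq]
    calc v x * v x ≤ exp (-1) * exp (-1) := mul_le_mul' hx' hx'
      _ < exp (-1) := by rw [← exp_add]; exact exp_lt_exp.mpr (by norm_num)
  have hsq : v y ^ 2 = exp (-1) := by
    rw [← map_pow, h, v.map_add_eq_of_lt_right hlt, he]
  have hlog := congrArg log hsq
  rw [log_pow, log_exp] at hlog
  lia

lemma finite_setOf_sq_eq {R : Type*} [CommRing R] [IsDomain R] (c : R) :
    {x | x ^ 2 = c}.Finite := by
  classical
  refine (Polynomial.nthRoots 2 c).toFinset.finite_toSet.subset fun x hx => ?_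
  simpa [Polynomial.mem_nthRoots two_pos] using hx

lemma infinite_image_fst {K : Type*} [Field K] {n : K} (hn : n ≠ 0) {g : K → K}
    (h : {P : K × K | n * P.2 ^ 2 = g P.1}.Infinite) :
    (Prod.fst '' {P : K × K | n * P.2 ^ 2 = g P.1}).Infinite := by
  refine fun hfin => h (hfin.of_finite_fibers _ fun x _ => ?_)
  refine ((Set.finite_singleton x).prod (finite_setOf_sq_eq (g x / n))).subset ?_
  rintro ⟨_, y⟩ ⟨hy, rfl⟩
  exact ⟨rfl, (eq_div_iff hn).mpr (mul_comm n _ ▸ hy)⟩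

lemma exists_prime_lt_dvd {n k : ℕ} (hn : Squarefree n) (h : ¬ n ∣ primorial k) :
    ∃ p, p.Prime ∧ k < p ∧ p ∣ n := by
  contrapose! h
  rw [← Nat.prod_primeFactors_of_squarefree hn]
  refine Finset.prod_dvd_prod_of_subset _ _ _ fun p hp => ?_
  have hp' := Nat.prime_of_mem_primeFactors hp
  have hpk : p ≤ k := not_lt.mp fun hlt => h p hp' hlt (Nat.dvd_of_mem_primeFactors hp)
  simpa [hp'] using Nat.lt_succ_iff.mpr hpk

lemma exists_triangle_of_point {K : Type*} [Field K] [LinearOrder K] [IsStrictOrderedRing K]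
    {d k x y : K} (hd : 0 < d) (hy : y ≠ 0) (hx : x ^ 2 ≠ k ^ 2 - 1)
    (h : d * y ^ 2 = x * (x + k - 1) * (x + k + 1)) :
    ∃ a b c : K, 0 < a ∧ 0 < b ∧ 0 < c ∧ a * b = 2 * d ∧
      c ^ 2 = a ^ 2 + b ^ 2 - 2 * a * b * k := by
  have hx0 : x ≠ 0 := by
    rintro rfl
    have hdy : d * y ^ 2 ≠ 0 := mul_ne_zero hd.ne' (pow_ne_zero 2 hy)
    exact hdy (by rw [h]; ring)
  have ha : d * y / x = ((x + k) ^ 2 - 1) / y := by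
    field_simp
    linear_combination h
  have hab : d * y / x * (2 * x / y) = 2 * d := by field_simp
  have hab_abs : |d * y / x| * |2 * x / y| = 2 * d := by
    rw [← abs_mul, hab, abs_of_pos (by positivity)]
  have hc : x ^ 2 + 1 - k ^ 2 ≠ 0 := fun h0 => hx (by linear_combination h0)
  refine ⟨|d * y / x|, |2 * x / y|, |(x ^ 2 + 1 - k ^ 2) / y|, by positivity, by positivity,
    by positivity, hab_abs, ?_⟩
  rw [mul_assoc 2 |_| |_|, hab_abs, ← hab, sq_abs, sq_abs, sq_abs, ha]
  field_simp
  ring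

/-- The set of affine rational points of `E_{n,θ}`, where `cos θ = s / r`. -/
def thetaCurve (r s : ℤ) (n : ℕ) : Set (ℚ × ℚ) :=
  {p | (n : ℚ) * p.2 ^ 2 = p.1 * (p.1 + (s : ℚ) / r - 1) * (p.1 + (s : ℚ) / r + 1) / r}

section ThetaCongruent

variable {r s : ℤ} {n p : ℕ}

lemma IsThetaCongruent.exists_squares (hr : r ≠ 0) (h : IsThetaCongruent r s n) :
    ∃ x y z : ℚ, y ^ 2 = x ^ 2 + n * (s + r) ∧ z ^ 2 = x ^ 2 + n * (s - r) := by
  obtain ⟨a, b, c, -, -, -, hab, hc⟩ := h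
  have hr0 : (r : ℚ) ≠ 0 := mod_cast hr
  have hc' : c ^ 2 = a ^ 2 + b ^ 2 - 4 * n * s := by
    rw [hc, mul_assoc 2 a b, hab]
    field_simp
    ring
  refine ⟨c / 2, (a + b) / 2, (a - b) / 2, ?_, ?_⟩
  · linear_combination hab / 2 - hc' / 4
  · linear_combination -hab / 2 - hc' / 4

lemma not_dvd_add_or_not_dvd_sub (hp : p.Prime) (hp2 : p ≠ 2) (hrs : ¬ p ∣ Int.gcd s r) :
    ¬ (p : ℤ) ∣ s + r ∨ ¬ (p : ℤ) ∣ s - r := by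
  by_contra! ⟨hadd, hsub⟩
  have hpZ := Nat.prime_iff_prime_int.mp hp
  have h2 : ¬ (p : ℤ) ∣ 2 := fun h =>
    hp2 ((Nat.prime_dvd_prime_iff_eq hp Nat.prime_two).mp (mod_cast h))
  have hs : (p : ℤ) ∣ 2 * s := by
    exact (dvd_add hadd hsub).trans (dvd_of_eq (by ring))
  have hr : (p : ℤ) ∣ 2 * r := by
    exact (dvd_sub hadd hsub).trans (dvd_of_eq (by ring))
  exact hrs (Int.natCast_dvd_natCast.mp <| Int.dvd_coe_gcd
    ((hpZ.dvd_or_dvd hs).resolve_left h2) ((hpZ.dvd_or_dvd hr).resolve_left h2))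

lemma padicValuation_natCast_eq_exp_neg_one [Fact p.Prime] (hpn : p ∣ n)
    (hpn2 : ¬ p ^ 2 ∣ n) : Rat.padicValuation p n = WithZero.exp (-1) := by
  obtain ⟨m, rfl⟩ := hpn
  have hm : Rat.padicValuation p ((m : ℤ) : ℚ) = 1 := by
    rw [Rat.padicValuation_cast, Int.padicValuation_eq_one_iff, Int.natCast_dvd_natCast]
    exact fun h => hpn2 (sq p ▸ mul_dvd_mul_left p h)
  rw [Int.cast_natCast] at hm
  rw [Nat.cast_mul, map_mul, hm, mul_one, Rat.padicValuation_self]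

theorem IsThetaCongruent.infinite_cubic (hr : r ≠ 0) (hp : p.Prime) (hp3 : 3 < p) (hpn : p ∣ n)
    (hpn2 : ¬ p ^ 2 ∣ n) (hrs : ¬ p ∣ Int.gcd s r) (h : IsThetaCongruent r s n) :
    {P : ℚ × ℚ | P.2 ^ 2 = P.1 * (P.1 + n * (s + r)) * (P.1 + n * (s - r))}.Infinite := by
  obtain ⟨x, y, z, hy, hz⟩ := h.exists_squares hr
  have : Fact p.Prime := ⟨hp⟩
  set v := Rat.padicValuation p
  have hvn : v n = v p := by
    rw [padicValuation_natCast_eq_exp_neg_one hpn hpn2, Rat.padicValuation_self]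
  have hvp : v p < 1 := by
    rw [Rat.padicValuation_self, ← WithZero.exp_zero]
    exact WithZero.exp_lt_exp.mpr (by norm_num)
  have hle (k : ℤ) : v (n * k) ≤ v p := by
    rw [map_mul, hvn, Rat.padicValuation_cast]
    exact mul_le_of_le_one_right' (Int.padicValuation_le_one p k)
  have hexp {k : ℤ} (hk : ¬ (p : ℤ) ∣ k) : v (n * k) = WithZero.exp (-1) := by
    rw [map_mul, hvn, Rat.padicValuation_cast, Int.padicValuation_eq_one_iff.mpr hk, mul_one,
      Rat.padicValuation_self]
  have hx : 1 ≤ v x := by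
    rcases not_dvd_add_or_not_dvd_sub hp (by lia) hrs with hk | hk
    · exact one_le_valuation_of_sq_eq_sq_add (hexp hk) (by exact_mod_cast hy)
    · exact one_le_valuation_of_sq_eq_sq_add (hexp hk) (by exact_mod_cast hz)
  exact infinite_cubic_of_sq_eq_sq_add hp hp3 hvp (by exact_mod_cast hle (s + r))
    (by exact_mod_cast hle (s - r)) hx hy hz

lemma infinite_thetaCurve_of_infinite_cubic (hr : r ≠ 0) (hn : n ≠ 0)
    (h : {P : ℚ × ℚ | P.2 ^ 2 = P.1 * (P.1 + n * (s + r)) * (P.1 + n * (s - r))}.Infinite) :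
    (thetaCurve r s n).Infinite := by
  have hr0 : (r : ℚ) ≠ 0 := mod_cast hr
  have hn0 : (n : ℚ) ≠ 0 := mod_cast hn
  have hinj : Function.Injective
      (Prod.map (fun X : ℚ => X / (n * r)) (fun Y : ℚ => Y / (n ^ 2 * r ^ 2))) :=
    Function.Injective.prodMap (fun _ _ => (div_left_inj' (by positivity)).mp)
      (fun _ _ => (div_left_inj' (by positivity)).mp)
  refine (h.image hinj.injOn).mono ?_
  rintro _ ⟨⟨X, Y⟩, hXY, rfl⟩
  simp only [thetaCurve, Set.mem_ofPred_eq, Prod.map_apply] at hXY ⊢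
  field_simp
  linear_combination hXY

theorem isThetaCongruent_of_infinite_thetaCurve (hr : 0 < r) (hn : 0 < n)
    (h : (thetaCurve r s n).Infinite) : IsThetaCongruent r s n := by
  have hr0 : (0 : ℚ) < r := mod_cast hr
  have hn0 : (0 : ℚ) < n := mod_cast hn
  set k : ℚ := (s : ℚ) / r
  have hbad : ({0, 1 - k, -1 - k} ∪ {x | x ^ 2 = k ^ 2 - 1} : Set ℚ).Finite :=
    (Set.toFinite _).union (finite_setOf_sq_eq _)
  have hfst := infinite_image_fst (g := fun x => x * (x + k - 1) * (x + k + 1) / r) hn0.ne' h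
  obtain ⟨_, ⟨⟨x, y⟩, hxy, rfl⟩, hx⟩ := (hfst.sdiff hbad).nonempty
  simp only [Set.mem_union, Set.mem_insert_iff, Set.mem_singleton_iff, Set.mem_ofPred_eq,
    not_or] at hx
  obtain ⟨⟨hx₀, hx₁, hx₂⟩, hx₃⟩ := hx
  have hcurve : n * r * y ^ 2 = x * (x + k - 1) * (x + k + 1) := by
    have hdiv : n * y ^ 2 = x * (x + k - 1) * (x + k + 1) / r := hxy
    rw [eq_div_iff hr0.ne'] at hdiv
    linear_combination hdiv
  have hy : y ≠ 0 := by
    rintro rfl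
    have hroot : x * (x + k - 1) * (x + k + 1) = 0 := by rw [← hcurve]; ring
    rcases mul_eq_zero.mp hroot with h₀₁ | h₂
    · rcases mul_eq_zero.mp h₀₁ with h₀ | h₁
      · exact hx₀ h₀
      · exact hx₁ (by linear_combination h₁)
    · exact hx₂ (by linear_combination h₂)
  simpa only [IsThetaCongruent, ← mul_assoc] using
    exists_triangle_of_point (mul_pos hn0 hr0) hy hx₃ hcurve

theorem fujiwara_theta_congruent_iff_positive_rank_general (hr : 0 < r) (hn : 0 < n) (hp : p.Prime)
    (hp3 : 3 < p) (hpn : p ∣ n) (hpn2 : ¬ p ^ 2 ∣ n) (hrs : ¬ p ∣ Int.gcd s r) :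
    IsThetaCongruent r s n ↔ (thetaCurve r s n).Infinite :=
  ⟨fun h => infinite_thetaCurve_of_infinite_cubic hr.ne' hn.ne'
    (h.infinite_cubic hr.ne' hp hp3 hpn hpn2 hrs), isThetaCongruent_of_infinite_thetaCurve hr hn⟩

lemma exists_prime_three_lt_dvd_of_squarefree (hn : Squarefree n) (h1 : n ≠ 1) (h2 : n ≠ 2)
    (h3 : n ≠ 3) (h6 : n ≠ 6) : ∃ p, p.Prime ∧ 3 < p ∧ p ∣ n ∧ ¬ p ^ 2 ∣ n := by
  have h : ¬ n ∣ primorial 3 := fun hdvd => by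
    have hmem : n ∈ Nat.divisors 6 := Nat.mem_divisors.mpr ⟨hdvd, by norm_num⟩
    simp_all [show Nat.divisors 6 = {1, 2, 3, 6} by decide]
  obtain ⟨p, hp, hp3, hpn⟩ := exists_prime_lt_dvd hn h
  exact ⟨p, hp, hp3, hpn, fun hp2 => hp.not_isUnit (hn p (sq p ▸ hp2))⟩

end ThetaCongruent

/-- (Fujiwara) A positive squarefree integer `n ∉ {1, 2, 3, 6}` is `θ`-congruent if and
only if the curve `E_{n,θ} : n·y² = (1/r)·x·(x + s/r − 1)·(x + s/r + 1)` has infinitely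
many rational points (equivalently, `E_{n,θ}(ℚ)` has positive rank). -/
theorem fujiwara_theta_congruent_iff_positive_rank
    (θ : ℝ) (hθ0 : 0 < θ) (hθπ : θ < Real.pi)
    (r s : ℤ) (hr : 0 < r) (hrs : Int.gcd s r = 1)
    (hcos : Real.cos θ = (s : ℝ) / (r : ℝ))
    (n : ℕ) (hn : 0 < n) (hnsf : Squarefree n)
    (h1 : n ≠ 1) (h2 : n ≠ 2) (h3 : n ≠ 3) (h6 : n ≠ 6) :
    IsThetaCongruent r s n ↔
      {p : ℚ × ℚ | (n : ℚ) * p.2 ^ 2 =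
        p.1 * (p.1 + (s : ℚ) / (r : ℚ) - 1) * (p.1 + (s : ℚ) / (r : ℚ) + 1) /
          (r : ℚ)}.Infinite := by
  obtain ⟨p, hp, hp3, hpn, hpn2⟩ := exists_prime_three_lt_dvd_of_squarefree hnsf h1 h2 h3 h6
  exact fujiwara_theta_congruent_iff_positive_rank_general hr hn hp hp3 hpn hpn2
    (hrs ▸ hp.not_dvd_one)
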